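/- There is an absolute constant C such that for all sufficiently large N and all 2 < h ≤ N, the number of ordered pairs of primes (p, p') with N < p < p' ≤ 2N, p' − p ≤ h, and such that p and p' are NOT consecutive primes (i.e., there exists a prime strictly between p and p') is at most C·(h/log N)²·π(N). -/

import Mathlib

open Finset

/-- The `n`-th prime number (`nthPrime 0 = 2`). -/
noncomputable def nthPrime (n : ℕ) : ℕ := Nat.nth Nat.Prime n

/-- The prime counting function `π(x)` at a real argument: the number of primes `≤ x`. -/
noncomputable def primePi (x : ℝ) : ℕ := Nat.primeCounting ⌊x⌋₊

/-- `P_H(n) = ∏_{h ∈ H} (n + h)`. -/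
def tuplePoly (H : Finset ℕ) (n : ℕ) : ℕ := ∏ h ∈ H, (n + h)

/-- `ν_p(H)`: the number of distinct residue classes modulo `p` occupied by `H`. -/
def nuP (p : ℕ) (H : Finset ℕ) : ℕ := (H.image (· % p)).card

/-- `H` is admissible: for every prime `p`, the elements of `H` miss a residue class mod `p`. -/
def Admissible (H : Finset ℕ) : Prop := ∀ p : ℕ, p.Prime → nuP p H < p

/-- The singular series `𝔖(H) = ∏_p (1 - 1/p)^{-|H|} (1 - ν_p(H)/p)`. -/
noncomputable def singularSeries (H : Finset ℕ) : ℝ :=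
  ∏' p : Nat.Primes, ((1 - 1/((p : ℕ) : ℝ)) ^ (-(H.card : ℤ)) * (1 - (nuP p H : ℝ)/((p : ℕ) : ℝ)))

/-- `Λ_R(n; H, ℓ) = (1/(|H|+ℓ)!) ∑_{d ∣ P_H(n), d ≤ R} μ(d) (log (R/d))^{|H|+ℓ}`. -/
noncomputable def LambdaR (R : ℝ) (n : ℕ) (H : Finset ℕ) (ℓ : ℕ) : ℝ :=
  (1 / (H.card + ℓ).factorial : ℝ) *
    ∑ d ∈ (tuplePoly H n).divisors.filter (fun d : ℕ => (d : ℝ) ≤ R),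
      (ArithmeticFunction.moebius d : ℝ) * (Real.log (R / d)) ^ (H.card + ℓ)

/-- `𝒫(x)`: the product of all primes `≤ x`. -/
noncomputable def primorialReal (x : ℝ) : ℕ :=
  ∏ p ∈ (Finset.range (⌊x⌋₊ + 1)).filter Nat.Prime, p

/-- `θ(n) = log n` if `n` is prime, and `0` otherwise. -/
noncomputable def theta (n : ℕ) : ℝ := if n.Prime then Real.log n else 0

/-- `∑_{p ≤ N, p prime, p ≡ a (mod q)} log p`. -/
noncomputable def primeSumAP (N q a : ℕ) : ℝ :=
  ∑ p ∈ (Finset.range (N+1)).filter (fun p => p.Prime ∧ p % q = a % q), Real.log p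

/-- The primes have level of distribution `ϑ`: for every `A > 0` and `ε > 0`,
`∑_{q ≤ N^{ϑ-ε}} max_{(a,q)=1} |∑_{p ≤ N, p ≡ a (q)} log p - N/φ(q)| ≪_{A,ε} N (log N)^{-A}`
(the max over `a` is expressed via an arbitrary coprime choice function `a : ℕ → ℕ`). -/
def HasLevelOfDistribution (ϑ : ℝ) : Prop :=
  ∀ A : ℝ, 0 < A → ∀ ε : ℝ, 0 < ε → ∃ C : ℝ, 0 < C ∧
    ∀ N : ℕ, 2 ≤ N → ∀ a : ℕ → ℕ, (∀ q : ℕ, Nat.Coprime (a q) q) →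
      ∑ q ∈ Finset.Icc 1 ⌊(N : ℝ) ^ (ϑ - ε)⌋₊,
        |primeSumAP N q (a q) - (N : ℝ) / (Nat.totient q)| ≤ C * N / (Real.log N) ^ A

/-- The number of `j` with `N < p_j ≤ 2N` and `p_{j+1} - p_j ≤ h`. -/
noncomputable def gapCount (N : ℕ) (h : ℝ) : ℕ :=
  ((Finset.range (2*N+1)).filter (fun j =>
    N < nthPrime j ∧ nthPrime j ≤ 2*N ∧ ((nthPrime (j+1) : ℝ) - nthPrime j) ≤ h)).card

/-- The number of `j` with `N < p_j ≤ 2N` and `p_{j+2} - p_j ≤ h`. -/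
noncomputable def gapCount2 (N : ℕ) (h : ℝ) : ℕ :=
  ((Finset.range (2*N+1)).filter (fun j =>
    N < nthPrime j ∧ nthPrime j ≤ 2*N ∧ ((nthPrime (j+2) : ℝ) - nthPrime j) ≤ h)).card

/-!
Let `p < m < q` be primes with `N < p < q ≤ 2 N` and `q - p ≤ h`. The gaps `i = m - p` and
`j = q - m` are at most `h`, so for each of the at most `h²` pairs `(i, j)` one has to count the
`n ∈ (N, 2 N]` for which `n`, `n + i` and `n + i + j` are all prime. The Selberg sieve bounds this
count by `O(N / (log N)³)`, up to a factor `(Δ / φ(Δ))³` coming from the primes which divide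
`Δ = 6 i (i + j) j`, at which the triple may occupy fewer than three residue classes. Every power of
`m / φ(m)` is bounded on average, hence so is this factor over the pairs `(i, j)`, and the total is
`O(h² N / (log N)³)`. Chebyshev's lower bound for `π(N)` finishes the proof.

For a `k`-tuple the denominator in Selberg's bound is a truncated Euler product with the factors
`1 + k / (p - k) ≥ (1 + 1 / (p - 1)) ^ k`. Since truncated Euler products are submultiplicative, it
is at least the `k`-th power of the truncated product of the `1 + 1 / (p - 1)`, and the latter
dominates `∑ 1 / n ≥ log y`. No sharp evaluation of the sieve sums is needed.
-/

section SelbergSieve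

open BoundingSieve ArithmeticFunction
open scoped ArithmeticFunction.Moebius

variable {s : BoundingSieve} {z : ℕ}

/-- The sum `∑ g(m)` of the Selberg terms over the multiples `m ≤ z` of `d` dividing the sifting
product. For `d = 1` it is the denominator in the main term of the Selberg sieve. -/
noncomputable def selbergSum (s : BoundingSieve) (z d : ℕ) : ℝ :=
  ∑ m ∈ s.prodPrimes.divisors with d ∣ m ∧ m ≤ z, s.selbergTerms m

/-- The optimal weights of the Selberg sieve of level `z ^ 2`, normalised to be `1` at `1`. -/
noncomputable def selbergWeight (s : BoundingSieve) (z d : ℕ) : ℝ :=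
  μ d * (s.nu d)⁻¹ * selbergSum s z d / selbergSum s z 1

lemma selbergSum_nonneg (d : ℕ) : 0 ≤ selbergSum s z d :=
  sum_nonneg fun _ hm ↦ (selbergTerms_pos (Nat.dvd_of_mem_divisors (mem_filter.1 hm).1)).le

lemma selbergSum_one_pos (hz : 1 ≤ z) : 0 < selbergSum s z 1 :=
  sum_pos (fun _ hm ↦ selbergTerms_pos (Nat.dvd_of_mem_divisors (mem_filter.1 hm).1))
    ⟨1, by simp [hz, prodPrimes_ne_zero]⟩

lemma selbergSum_eq_zero_of_lt {d : ℕ} (hd : z < d) : selbergSum s z d = 0 := by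
  refine sum_eq_zero fun m hm ↦ ?_
  obtain ⟨hmP, hdm, hmz⟩ := mem_filter.1 hm
  have := Nat.le_of_dvd (Nat.pos_of_mem_divisors hmP) hdm
  omega

lemma selbergWeight_one (hz : 1 ≤ z) : selbergWeight s z 1 = 1 := by
  simp [selbergWeight, s.nu_mult.map_one, (selbergSum_one_pos hz).ne']

lemma selbergWeight_eq_zero_of_lt {d : ℕ} (hd : z < d) : selbergWeight s z d = 0 := by
  simp [selbergWeight, selbergSum_eq_zero_of_lt hd]

lemma div_gcd_div_eq_of_dvd_of_dvd_of_squarefree {l d m : ℕ} (hm : Squarefree m) (hld : l ∣ d)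
    (hdm : d ∣ m) : d / d.gcd (m / l) = l := by
  obtain ⟨e, rfl⟩ := hld
  obtain ⟨c, rfl⟩ := hdm
  have hl : 0 < l := Nat.pos_of_ne_zero fun h ↦ hm.ne_zero (by simp [h])
  have he : 0 < e := Nat.pos_of_ne_zero fun h ↦ hm.ne_zero (by simp [h])
  have hlc : l.Coprime c := (Nat.coprime_of_squarefree_mul hm).coprime_dvd_left (dvd_mul_right l e)
  rw [mul_assoc, Nat.mul_div_cancel_left _ hl, mul_comm l e, Nat.gcd_mul_left,
    hlc.gcd_eq_one, mul_one, Nat.mul_div_cancel_left _ he]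

lemma selbergTerms_div {l m : ℕ} (hlm : l ∣ m) (hm : m ∣ s.prodPrimes) :
    s.selbergTerms (m / l) = (s.selbergTerms l)⁻¹ * s.selbergTerms m := by
  rw [selbergTerms_isMultiplicative.map_div_of_coprime hlm, div_eq_inv_mul]
  · exact Nat.coprime_of_squarefree_mul
      ((Nat.div_mul_cancel hlm).symm ▸ squarefree_of_dvd_prodPrimes hm)
  · exact (selbergTerms_pos (hlm.trans hm)).ne'

/- Expanding `ν(d)⁻¹ = ∑ g(l)⁻¹` over the divisors `l` of `d`, the left side becomes the sum of
`g(m / l)` over all pairs with `l ∣ d ∣ m`, and `m / l` determines both `l` and `m`. -/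
lemma inv_nu_mul_selbergSum_le {d : ℕ} (hd : d ∣ s.prodPrimes) :
    (s.nu d)⁻¹ * selbergSum s z d ≤ selbergSum s z 1 := by
  set pairs := d.divisors ×ˢ {m ∈ s.prodPrimes.divisors | d ∣ m ∧ m ≤ z} with hpairs
  have mem_pairs {x : ℕ × ℕ} (hx : x ∈ pairs) :
      x.1 ∣ d ∧ d ∣ x.2 ∧ x.2 ∣ s.prodPrimes ∧ x.2 ≤ z := by
    simp only [hpairs, mem_product, mem_filter, Nat.mem_divisors] at hx
    exact ⟨hx.1.1, hx.2.2.1, hx.2.1.1, hx.2.2.2⟩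
  have inj : Set.InjOn (fun x : ℕ × ℕ ↦ x.2 / x.1) pairs := by
    rintro ⟨l, m⟩ hx ⟨l', m'⟩ hx' heq
    obtain ⟨hld, hdm, hmP, -⟩ := mem_pairs hx
    obtain ⟨hld', hdm', hmP', -⟩ := mem_pairs hx'
    dsimp only at hld hdm hmP hld' hdm' hmP' heq
    have hl : l = l' := by
      rw [← div_gcd_div_eq_of_dvd_of_dvd_of_squarefree (squarefree_of_dvd_prodPrimes hmP) hld hdm,
        heq, div_gcd_div_eq_of_dvd_of_dvd_of_squarefree (squarefree_of_dvd_prodPrimes hmP') hld'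
          hdm']
    rw [← Nat.div_mul_cancel (hld.trans hdm), ← Nat.div_mul_cancel (hld'.trans hdm'), heq, hl]
  calc (s.nu d)⁻¹ * selbergSum s z d
      = ∑ x ∈ pairs, s.selbergTerms (x.2 / x.1) := by
        have selbergTerms_div_pair (x) (hx : x ∈ pairs) :=
          selbergTerms_div ((mem_pairs hx).1.trans (mem_pairs hx).2.1) (mem_pairs hx).2.2.1
        rw [sum_congr rfl selbergTerms_div_pair, hpairs, sum_product, selbergSum,
          nu_inv_eq_sum_divisors_inv_selbergTerms hd, ← sum_filter,
          Nat.divisors_filter_dvd_of_dvd prodPrimes_ne_zero hd, sum_mul_sum]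
    _ = ∑ n ∈ pairs.image fun x ↦ x.2 / x.1, s.selbergTerms n := (sum_image inj).symm
    _ ≤ selbergSum s z 1 := by
        refine sum_le_sum_of_subset_of_nonneg (image_subset_iff.2 fun x hx ↦ ?_) fun n hn _ ↦
          (selbergTerms_pos (Nat.dvd_of_mem_divisors (mem_filter.1 hn).1)).le
        obtain ⟨hld, hdm, hmP, hmz⟩ := mem_pairs hx
        simpa [prodPrimes_ne_zero] using ⟨(Nat.div_dvd_of_dvd (hld.trans hdm)).trans hmP,
          (Nat.div_le_self _ _).trans hmz⟩

lemma abs_selbergWeight_le_one (hz : 1 ≤ z) {d : ℕ} (hd : d ∣ s.prodPrimes) :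
    |selbergWeight s z d| ≤ 1 := by
  have hμ : |(μ d : ℝ)| ≤ 1 := mod_cast abs_moebius_le_one
  rw [selbergWeight, abs_div, mul_assoc, abs_mul, abs_of_pos (selbergSum_one_pos hz),
    abs_of_nonneg (mul_nonneg (inv_pos.2 (nu_pos_of_dvd_prodPrimes hd)).le (selbergSum_nonneg d))]
  exact div_le_one_of_le₀ ((mul_le_of_le_one_left (mul_nonneg
    (inv_pos.2 (nu_pos_of_dvd_prodPrimes hd)).le (selbergSum_nonneg d)) hμ).trans
    (inv_nu_mul_selbergSum_le hd)) (selbergSum_nonneg 1)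

lemma sum_moebius_filter_dvd {l m : ℕ} (hm : Squarefree m) :
    ∑ d ∈ m.divisors with l ∣ d, μ d = if l = m then μ l else 0 := by
  by_cases hlm : l ∣ m
  · obtain ⟨e, rfl⟩ := hlm
    have hl : 0 < l := Nat.pos_of_ne_zero (left_ne_zero_of_mul hm.ne_zero)
    have multiples : {d ∈ (l * e).divisors | l ∣ d} = e.divisors.image (l * ·) := by
      ext d
      simp only [mem_filter, Nat.mem_divisors, mem_image]
      constructor
      · rintro ⟨⟨hd, hle⟩, c, rfl⟩
        exact ⟨c, ⟨Nat.dvd_of_mul_dvd_mul_left hl hd, right_ne_zero_of_mul hle⟩, rfl⟩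
      · rintro ⟨c, ⟨hc, -⟩, rfl⟩
        exact ⟨⟨Nat.mul_dvd_mul_left l hc, hm.ne_zero⟩, dvd_mul_right l c⟩
    have moebius_mul (c : ℕ) (hc : c ∈ e.divisors) : μ (l * c) = μ l * μ c :=
      isMultiplicative_moebius.map_mul_of_coprime <|
        (Nat.coprime_of_squarefree_mul hm).coprime_dvd_right (Nat.dvd_of_mem_divisors hc)
    rw [multiples, sum_image (fun _ _ _ _ h ↦ Nat.eq_of_mul_eq_mul_left hl h),
      sum_congr rfl moebius_mul, ← mul_sum, ← coe_mul_zeta_apply, moebius_mul_coe_zeta, one_apply]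
    simp [hl.ne']
  · rw [if_neg (by rintro rfl; exact hlm dvd_rfl), sum_eq_zero]
    intro d hd
    obtain ⟨hdm, hld⟩ := mem_filter.1 hd
    exact absurd (hld.trans (Nat.dvd_of_mem_divisors hdm)) hlm

lemma sum_nu_mul_selbergWeight {l : ℕ} (hl : l ∣ s.prodPrimes) :
    (∑ d ∈ s.prodPrimes.divisors, if l ∣ d then s.nu d * selbergWeight s z d else 0) =
      if l ≤ z then μ l * s.selbergTerms l / selbergSum s z 1 else 0 := by
  have nu_mul_weight (d : ℕ) (hd : d ∈ s.prodPrimes.divisors) :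
      s.nu d * selbergWeight s z d = ∑ m ∈ s.prodPrimes.divisors with m ≤ z,
        if d ∣ m then (μ d : ℝ) * (s.selbergTerms m / selbergSum s z 1) else 0 := by
    rw [← sum_filter, filter_filter, ← mul_sum, ← sum_div, selbergWeight, selbergSum]
    simp only [and_comm]
    field [nu_ne_zero (Nat.dvd_of_mem_divisors hd)]
  have sum_moebius (m : ℕ) (hm : m ∈ {m ∈ s.prodPrimes.divisors | m ≤ z}) :
      (∑ d ∈ s.prodPrimes.divisors with l ∣ d,
        if d ∣ m then (μ d : ℝ) * (s.selbergTerms m / selbergSum s z 1) else 0) =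
      if l = m then (μ l : ℝ) * (s.selbergTerms l / selbergSum s z 1) else 0 := by
    have hmP := Nat.dvd_of_mem_divisors (mem_filter.1 hm).1
    have h := congrArg (Int.cast (R := ℝ))
      (sum_moebius_filter_dvd (l := l) (squarefree_of_dvd_prodPrimes hmP))
    push_cast at h
    rw [← sum_filter, filter_filter, ← sum_mul]
    simp_rw [and_comm (a := l ∣ _)]
    rw [← filter_filter, Nat.divisors_filter_dvd_of_dvd prodPrimes_ne_zero hmP, h]
    split_ifs with hlm
    · rw [hlm]
    · rw [zero_mul]
  rw [← sum_filter, sum_congr rfl fun d hd ↦ nu_mul_weight d (mem_filter.1 hd).1, sum_comm,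
    sum_congr rfl sum_moebius, sum_ite_eq]
  simp [hl, prodPrimes_ne_zero, mul_div_assoc]

lemma mainSum_lambdaSquared_selbergWeight (hz : 1 ≤ z) :
    s.mainSum (lambdaSquared (selbergWeight s z)) = (selbergSum s z 1)⁻¹ := by
  have diagonal_term (l : ℕ) (hl : l ∈ s.prodPrimes.divisors) :
      (s.selbergTerms l)⁻¹ * (∑ d ∈ s.prodPrimes.divisors,
        if l ∣ d then s.nu d * selbergWeight s z d else 0) ^ 2 =
      if 1 ∣ l ∧ l ≤ z then s.selbergTerms l / selbergSum s z 1 ^ 2 else 0 := by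
    have hlP := Nat.dvd_of_mem_divisors hl
    have hμ : (μ l : ℝ) ^ 2 = 1 :=
      mod_cast moebius_sq_eq_one_of_squarefree (squarefree_of_dvd_prodPrimes hlP)
    rw [sum_nu_mul_selbergWeight hlP]
    by_cases hlz : l ≤ z
    · simp only [hlz, if_true, one_dvd, and_self, div_pow, mul_pow, hμ]
      field [(selbergTerms_pos hlP).ne']
    · simp [hlz]
  rw [mainSum_lambdaSquared_eq_sum_mul_sum_sq, sum_congr rfl diagonal_term, ← sum_filter,
    ← sum_div, ← selbergSum]
  field [(selbergSum_one_pos (s := s) hz).ne']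

lemma errSum_lambdaSquared_le (w : ℕ → ℝ) :
    s.errSum (lambdaSquared w) ≤ ∑ d₁ ∈ s.prodPrimes.divisors, ∑ d₂ ∈ s.prodPrimes.divisors,
      |w d₁| * |w d₂| * |s.rem (d₁.lcm d₂)| := by
  have abs_lambdaSquared_mul_le (d : ℕ) (hd : d ∈ s.prodPrimes.divisors) :
      |lambdaSquared w d| * |s.rem d| ≤ ∑ d₁ ∈ s.prodPrimes.divisors,
        ∑ d₂ ∈ s.prodPrimes.divisors,
          if d = d₁.lcm d₂ then |w d₁| * |w d₂| * |s.rem d| else 0 := by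
    have hsub : d.divisors ⊆ s.prodPrimes.divisors :=
      Nat.divisors_subset_of_dvd prodPrimes_ne_zero (Nat.dvd_of_mem_divisors hd)
    calc |lambdaSquared w d| * |s.rem d|
        ≤ (∑ d₁ ∈ d.divisors, ∑ d₂ ∈ d.divisors,
            if d = d₁.lcm d₂ then |w d₁| * |w d₂| else 0) * |s.rem d| := by
          gcongr
          refine (abs_sum_le_sum_abs _ _).trans (sum_le_sum fun d₁ _ ↦ ?_)
          refine (abs_sum_le_sum_abs _ _).trans (sum_le_sum fun d₂ _ ↦ ?_)
          split_ifs <;> simp [abs_mul]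
      _ = ∑ d₁ ∈ d.divisors, ∑ d₂ ∈ d.divisors,
            if d = d₁.lcm d₂ then |w d₁| * |w d₂| * |s.rem d| else 0 := by
          simp_rw [sum_mul, ite_mul, zero_mul]
      _ ≤ _ := by
          refine (sum_le_sum fun d₁ _ ↦ sum_le_sum_of_subset_of_nonneg hsub ?_).trans
            (sum_le_sum_of_subset_of_nonneg hsub fun _ _ _ ↦ sum_nonneg ?_) <;>
          · intros
            split_ifs <;> positivity
  refine (sum_le_sum abs_lambdaSquared_mul_le).trans_eq ?_
  rw [sum_comm]
  refine sum_congr rfl fun d₁ hd₁ ↦ ?_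
  rw [sum_comm]
  refine sum_congr rfl fun d₂ hd₂ ↦ sum_ite_eq_of_mem' _ _ _ ?_
  exact Nat.mem_divisors.2 ⟨Nat.lcm_dvd (Nat.dvd_of_mem_divisors hd₁)
    (Nat.dvd_of_mem_divisors hd₂), prodPrimes_ne_zero⟩

theorem siftedSum_le_div_selbergSum_add (hz : 1 ≤ z) :
    s.siftedSum ≤ s.totalMass / selbergSum s z 1 +
      ∑ d₁ ∈ s.prodPrimes.divisors with d₁ ≤ z, ∑ d₂ ∈ s.prodPrimes.divisors with d₂ ≤ z,
        |s.rem (d₁.lcm d₂)| := by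
  have abs_weight_le {d : ℕ} (hd : d ∈ s.prodPrimes.divisors) :
      |selbergWeight s z d| ≤ if d ≤ z then 1 else 0 := by
    split_ifs with hdz
    · exact abs_selbergWeight_le_one hz (Nat.dvd_of_mem_divisors hd)
    · simp [selbergWeight_eq_zero_of_lt (not_le.1 hdz)]
  have h := siftedSum_le_mainSum_errSum_of_upperMoebius (s := s) _
    (upperMoebius_lambdaSquared _ (selbergWeight_one (s := s) hz))
  rw [mainSum_lambdaSquared_selbergWeight hz, ← div_eq_mul_inv] at h
  refine h.trans ((add_le_add_iff_left _).2 ((errSum_lambdaSquared_le _).trans ?_))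
  simp_rw [sum_filter, ite_sum_zero]
  refine sum_le_sum fun d₁ hd₁ ↦ sum_le_sum fun d₂ hd₂ ↦ ?_
  grw [abs_weight_le hd₁, abs_weight_le hd₂]
  split_ifs <;> simp

end SelbergSieve

section TruncatedEulerProduct

/-- The sum `∑ g(d)` over the squarefree products `d ≤ y` of elements of `S`, where `g` is extended
multiplicatively: the expansion of `∏ p ∈ S, (1 + g p)` truncated at `y`. A product `d` is encoded
by the set `T ⊆ S` of its factors. -/
def truncatedEulerProduct (g : ℕ → ℝ) (S : Finset ℕ) (y : ℕ) : ℝ :=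
  ∑ T ∈ S.powerset with ∏ p ∈ T, p ≤ y, ∏ p ∈ T, g p

variable {g a b : ℕ → ℝ} {S : Finset ℕ} {x y : ℕ}

lemma truncatedEulerProduct_empty : truncatedEulerProduct g ∅ y = if y = 0 then 0 else 1 := by
  rcases y.eq_zero_or_pos with rfl | hy
  · simp [truncatedEulerProduct, filter_singleton]
  · simp [truncatedEulerProduct, filter_singleton, hy.ne', Nat.one_le_iff_ne_zero]

lemma truncatedEulerProduct_insert {p : ℕ} (hpS : p ∉ S) (hp : 0 < p) :
    truncatedEulerProduct g (insert p S) y =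
      truncatedEulerProduct g S y + g p * truncatedEulerProduct g S (y / p) := by
  simp only [truncatedEulerProduct, sum_filter, sum_powerset_insert hpS, mul_sum, mul_ite, mul_zero]
  congr 1
  refine sum_congr rfl fun T hT ↦ ?_
  have hpT : p ∉ T := fun h ↦ hpS (mem_powerset.1 hT h)
  simp only [prod_insert hpT, Nat.le_div_iff_mul_le hp, mul_comm p]

lemma truncatedEulerProduct_nonneg (hg : ∀ p ∈ S, 0 ≤ g p) : 0 ≤ truncatedEulerProduct g S y :=
  sum_nonneg fun _ hT ↦ prod_nonneg fun p hp ↦ hg p (mem_powerset.1 (mem_filter.1 hT).1 hp)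

lemma one_le_truncatedEulerProduct (hg : ∀ p ∈ S, 0 ≤ g p) (hy : 1 ≤ y) :
    1 ≤ truncatedEulerProduct g S y := by
  refine (prod_empty (f := g)).symm.trans_le (single_le_sum (f := fun T ↦ ∏ p ∈ T, g p)
    (fun T hT ↦ prod_nonneg fun p hp ↦ ?_) (by simpa using hy))
  exact hg p (mem_powerset.1 (mem_filter.1 hT).1 hp)

lemma truncatedEulerProduct_le_of_le (hg : ∀ p ∈ S, 0 ≤ g p) (hxy : x ≤ y) :
    truncatedEulerProduct g S x ≤ truncatedEulerProduct g S y := by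
  refine sum_le_sum_of_subset_of_nonneg (monotone_filter_right _ fun T _ h ↦ h.trans hxy)
    fun T hT _ ↦ prod_nonneg fun p hp ↦ ?_
  exact hg p (mem_powerset.1 (mem_filter.1 hT).1 hp)

lemma truncatedEulerProduct_le_of_forall_le (ha : ∀ p ∈ S, 0 ≤ a p) (hab : ∀ p ∈ S, a p ≤ b p) :
    truncatedEulerProduct a S y ≤ truncatedEulerProduct b S y := by
  refine sum_le_sum fun T hT ↦ ?_
  have hTS := mem_powerset.1 (mem_filter.1 hT).1
  exact prod_le_prod (fun p hp ↦ ha p (hTS hp)) fun p hp ↦ hab p (hTS hp)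

lemma truncatedEulerProduct_mul_le (hS : ∀ p ∈ S, 0 < p) (ha : ∀ p ∈ S, 0 ≤ a p)
    (hb : ∀ p ∈ S, 0 ≤ b p) :
    truncatedEulerProduct a S x * truncatedEulerProduct b S y ≤
      truncatedEulerProduct (fun p ↦ (1 + a p) * (1 + b p) - 1) S (x * y) := by
  set c : ℕ → ℝ := fun p ↦ (1 + a p) * (1 + b p) - 1 with hc
  have c_nonneg {p : ℕ} (hap : 0 ≤ a p) (hbp : 0 ≤ b p) : 0 ≤ c p := by
    have := mul_nonneg hap hbp
    simp only [hc]
    linarith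
  induction S using Finset.induction_on generalizing x y with
  | empty =>
    simp only [truncatedEulerProduct_empty, mul_eq_zero]
    split_ifs <;> simp_all
  | insert p S hpS ih =>
    obtain ⟨hp, hS⟩ := forall_mem_insert .. |>.1 hS
    obtain ⟨hap, ha⟩ := forall_mem_insert .. |>.1 ha
    obtain ⟨hbp, hb⟩ := forall_mem_insert .. |>.1 hb
    have product_le {x' y' : ℕ} (h : x' * y' ≤ x * y / p) :
        truncatedEulerProduct a S x' * truncatedEulerProduct b S y' ≤
          truncatedEulerProduct c S (x * y / p) :=
      (ih hS ha hb).trans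
        (truncatedEulerProduct_le_of_le (fun q hq ↦ c_nonneg (ha q hq) (hb q hq)) h)
    have h₁ := product_le (x' := x / p) (y' := y) (by
      simpa only [mul_comm] using Nat.mul_div_le_mul_div_assoc y x p)
    have h₂ := product_le (x' := x) (y' := y / p) (Nat.mul_div_le_mul_div_assoc x y p)
    have h₃ := product_le (x' := x / p) (y' := y / p)
      ((Nat.mul_le_mul_right _ (Nat.div_le_self x p)).trans (Nat.mul_div_le_mul_div_assoc x y p))
    simp only [truncatedEulerProduct_insert hpS hp]
    calc _ = truncatedEulerProduct a S x * truncatedEulerProduct b S y +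
          (a p * (truncatedEulerProduct a S (x / p) * truncatedEulerProduct b S y) +
          b p * (truncatedEulerProduct a S x * truncatedEulerProduct b S (y / p)) +
          a p * b p * (truncatedEulerProduct a S (x / p) * truncatedEulerProduct b S (y / p))) := by
          ring
      _ ≤ truncatedEulerProduct c S (x * y) + (a p * truncatedEulerProduct c S (x * y / p) +
          b p * truncatedEulerProduct c S (x * y / p) +
          a p * b p * truncatedEulerProduct c S (x * y / p)) := by
          gcongr
          exact ih hS ha hb
      _ = _ := by
          simp only [hc]
          ring

lemma truncatedEulerProduct_pow_le (hS : ∀ p ∈ S, 0 < p) (ha : ∀ p ∈ S, 0 ≤ a p) (k : ℕ) :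
    truncatedEulerProduct a S y ^ k ≤
      truncatedEulerProduct (fun p ↦ (1 + a p) ^ k - 1) S (y ^ k) := by
  induction k with
  | zero => simpa using one_le_truncatedEulerProduct (by simp) le_rfl
  | succ k ih =>
    have hpow (p : ℕ) (hp : p ∈ S) : 0 ≤ (1 + a p) ^ k - 1 :=
      sub_nonneg.2 (one_le_pow₀ (le_add_of_nonneg_right (ha p hp)))
    calc truncatedEulerProduct a S y ^ (k + 1)
        ≤ truncatedEulerProduct (fun p ↦ (1 + a p) ^ k - 1) S (y ^ k) *
            truncatedEulerProduct a S y := by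
          rw [pow_succ]
          gcongr
          exact truncatedEulerProduct_nonneg ha
      _ ≤ _ := truncatedEulerProduct_mul_le hS hpow ha
      _ = _ := by simp only [add_sub_cancel, pow_succ]

lemma truncatedEulerProduct_union_le {T : Finset ℕ} (hT : ∀ p ∈ T, 0 < p)
    (hg : ∀ p ∈ S ∪ T, 0 ≤ g p) :
    truncatedEulerProduct g (S ∪ T) y ≤ truncatedEulerProduct g S y * ∏ p ∈ T, (1 + g p) := by
  induction T using Finset.induction_on with
  | empty => simp
  | insert p T hpT ih =>
    obtain ⟨hp, hT⟩ := forall_mem_insert .. |>.1 hT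
    rw [union_insert] at hg ⊢
    obtain ⟨hgp, hg⟩ := forall_mem_insert .. |>.1 hg
    suffices truncatedEulerProduct g (insert p (S ∪ T)) y ≤
        (1 + g p) * truncatedEulerProduct g (S ∪ T) y by
      grw [this, ih hT hg, prod_insert hpT, mul_left_comm]
    have hF := truncatedEulerProduct_nonneg (y := y) hg
    by_cases hpS : p ∈ S ∪ T
    · rw [insert_eq_of_mem hpS]
      exact le_mul_of_one_le_left hF (le_add_of_nonneg_right hgp)
    · rw [truncatedEulerProduct_insert hpS hp, add_mul, one_mul]
      gcongr
      exact truncatedEulerProduct_le_of_le hg (Nat.div_le_self y p)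

lemma selbergSum_one_eq_truncatedEulerProduct (s : BoundingSieve) (z : ℕ) :
    selbergSum s z 1 = truncatedEulerProduct s.selbergTerms s.prodPrimes.primeFactors z := by
  have prime_of_mem {T : Finset ℕ} (hT : T ⊆ s.prodPrimes.primeFactors) (p) (hp : p ∈ T) :
      p.Prime := Nat.prime_of_mem_primeFactors (hT hp)
  symm
  refine sum_nbij' (fun T ↦ ∏ p ∈ T, p) Nat.primeFactors (fun T hT ↦ ?_) (fun d hd ↦ ?_)
    (fun T hT ↦ ?_) (fun d hd ↦ ?_) fun T hT ↦ ?_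
  all_goals simp only [mem_filter, mem_powerset, Nat.mem_divisors, one_dvd, true_and] at *
  · exact ⟨⟨(prod_dvd_prod_of_subset _ _ _ hT.1).trans (Nat.prod_primeFactors_dvd _),
      BoundingSieve.prodPrimes_ne_zero⟩, hT.2⟩
  · rw [Nat.prod_primeFactors_of_squarefree (BoundingSieve.squarefree_of_dvd_prodPrimes hd.1.1)]
    exact ⟨Nat.primeFactors_mono hd.1.1 hd.1.2, hd.2⟩
  · exact Nat.primeFactors_prod (prime_of_mem hT.1)
  · exact Nat.prod_primeFactors_of_squarefree (BoundingSieve.squarefree_of_dvd_prodPrimes hd.1.1)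
  · exact (BoundingSieve.selbergTerms_isMultiplicative.map_prod_of_prime T
      (prime_of_mem hT.1)).symm

end TruncatedEulerProduct

section Totient

/-- The ratio `m / φ(m)`, equal to `0` at `m = 0`. -/
noncomputable def totientRatio (m : ℕ) : ℝ := m / m.totient

lemma one_add_inv_sub_one_eq_inv {p : ℕ} (hp : p.Prime) :
    1 + ((p : ℝ) - 1)⁻¹ = (1 - (p : ℝ)⁻¹)⁻¹ := by
  have h1 : (1 : ℝ) < p := mod_cast hp.one_lt
  field [(sub_pos.2 h1).ne', (zero_lt_one.trans h1).ne']

lemma totientRatio_eq_prod {m : ℕ} (hm : m ≠ 0) :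
    totientRatio m = ∏ p ∈ m.primeFactors, (1 + ((p : ℝ) - 1)⁻¹) := by
  have hφ : (m.totient : ℝ) = m * ∏ p ∈ m.primeFactors, (1 - (p : ℝ)⁻¹) := by
    have h := congrArg (Rat.cast (K := ℝ)) (Nat.totient_eq_mul_prod_factors m)
    push_cast at h
    exact h
  rw [totientRatio, hφ, ← div_div, div_self (Nat.cast_ne_zero.2 hm), one_div, ← prod_inv_distrib]
  exact prod_congr rfl fun p hp ↦
    (one_add_inv_sub_one_eq_inv (Nat.prime_of_mem_primeFactors hp)).symm

lemma one_le_totientRatio {m : ℕ} (hm : m ≠ 0) : 1 ≤ totientRatio m :=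
  (one_le_div (Nat.cast_pos.2 (Nat.totient_pos.2 (Nat.pos_of_ne_zero hm)))).2
    (Nat.cast_le.2 m.totient_le)

lemma totientRatio_nonneg (m : ℕ) : 0 ≤ totientRatio m := by
  unfold totientRatio
  positivity

lemma totientRatio_mul_le (m n : ℕ) :
    totientRatio (m * n) ≤ totientRatio m * totientRatio n := by
  rcases m.eq_zero_or_pos with rfl | hm
  · simp [totientRatio]
  rcases n.eq_zero_or_pos with rfl | hn
  · simp [totientRatio]
  have : (0 : ℝ) < m.totient := Nat.cast_pos.2 (Nat.totient_pos.2 hm)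
  have : (0 : ℝ) < n.totient := Nat.cast_pos.2 (Nat.totient_pos.2 hn)
  rw [totientRatio, totientRatio, totientRatio, div_mul_div_comm, Nat.cast_mul]
  gcongr
  exact mod_cast Nat.totient_super_multiplicative m n

lemma sum_inv_filter_primeFactors_subset_le {T : Finset ℕ} (hT : ∀ p ∈ T, p.Prime) (y : ℕ) :
    ∑ n ∈ Icc 1 y with n.primeFactors ⊆ T, (n : ℝ)⁻¹ ≤ ∏ p ∈ T, (1 - (p : ℝ)⁻¹)⁻¹ := by
  classical
  let inv : ℕ →* ℝ := (invMonoidWithZeroHom (G₀ := ℝ) : ℝ →* ℝ).comp (Nat.castRingHom ℝ)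
  have norm_inv_lt {p : ℕ} (hp : p.Prime) : ‖inv p‖ < 1 := by
    suffices ‖(p : ℝ)⁻¹‖ < 1 from this
    simpa using inv_lt_one_of_one_lt₀ (Nat.one_lt_cast (α := ℝ).2 hp.one_lt)
  have euler :=
    (EulerProduct.summable_and_hasSum_factoredNumbers_prod_filter_prime_geometric norm_inv_lt T).2
  rw [filter_true_of_mem hT] at euler
  have mem_factoredNumbers (n : ℕ) (hn : n ∈ {n ∈ Icc 1 y | n.primeFactors ⊆ T}) :
      n ∈ Nat.factoredNumbers T := by
    obtain ⟨hn, hnT⟩ := mem_filter.1 hn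
    exact Nat.mem_factoredNumbers_of_primeFactors_subset
      (Nat.one_le_iff_ne_zero.1 (mem_Icc.1 hn).1) hnT
  rw [← sum_subtype_of_mem _ mem_factoredNumbers]
  exact sum_le_hasSum _ (fun n _ ↦ by positivity) euler

lemma sum_inv_filter_primeFactors_eq_le {T : Finset ℕ} (hT : ∀ p ∈ T, p.Prime) (y : ℕ) :
    ∑ n ∈ Icc 1 y with n.primeFactors = T, (n : ℝ)⁻¹ ≤ ∏ p ∈ T, ((p : ℝ) - 1)⁻¹ := by
  set R := ∏ p ∈ T, p
  have hR : 0 < R := prod_pos fun p hp ↦ (hT p hp).pos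
  have subset_image : {n ∈ Icc 1 y | n.primeFactors = T} ⊆
      {m ∈ Icc 1 y | m.primeFactors ⊆ T}.image (R * ·) := by
    intro n hn
    obtain ⟨hny, rfl⟩ := mem_filter.1 hn
    obtain ⟨hn0, hny⟩ := mem_Icc.1 hny
    obtain ⟨m, hm⟩ : R ∣ n := Nat.prod_primeFactors_dvd n
    have hmn : m ∣ n := hm ▸ dvd_mul_left m R
    exact mem_image.2 ⟨m, mem_filter.2 ⟨mem_Icc.2 ⟨Nat.pos_of_dvd_of_pos hmn hn0,
      (Nat.le_of_dvd hn0 hmn).trans hny⟩,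
      Nat.primeFactors_mono hmn (Nat.one_le_iff_ne_zero.1 hn0)⟩, hm.symm⟩
  calc ∑ n ∈ Icc 1 y with n.primeFactors = T, (n : ℝ)⁻¹
      ≤ ∑ n ∈ {m ∈ Icc 1 y | m.primeFactors ⊆ T}.image (R * ·), (n : ℝ)⁻¹ :=
        sum_le_sum_of_subset_of_nonneg subset_image fun _ _ _ ↦ by positivity
    _ = (R : ℝ)⁻¹ * ∑ m ∈ Icc 1 y with m.primeFactors ⊆ T, (m : ℝ)⁻¹ := by
        rw [sum_image fun _ _ _ _ h ↦ Nat.eq_of_mul_eq_mul_left hR h, mul_sum]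
        simp only [Nat.cast_mul, mul_inv]
    _ ≤ (R : ℝ)⁻¹ * ∏ p ∈ T, (1 - (p : ℝ)⁻¹)⁻¹ := by
        gcongr
        exact sum_inv_filter_primeFactors_subset_le hT y
    _ = ∏ p ∈ T, ((p : ℝ) - 1)⁻¹ := by
        rw [Nat.cast_prod, ← prod_inv_distrib, ← prod_mul_distrib]
        refine prod_congr rfl fun p hp ↦ ?_
        rw [← mul_inv, mul_one_sub, mul_inv_cancel₀ (Nat.cast_ne_zero.2 (hT p hp).ne_zero)]

lemma log_le_truncatedEulerProduct_primesLE {y : ℕ} (hy : 0 < y) :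
    Real.log y ≤ truncatedEulerProduct (fun p ↦ ((p : ℝ) - 1)⁻¹) y.primesLE y := by
  have maps_to (n : ℕ) (hn : n ∈ Icc 1 y) :
      n.primeFactors ∈ {T ∈ y.primesLE.powerset | ∏ p ∈ T, p ≤ y} := by
    obtain ⟨hn0, hny⟩ := mem_Icc.1 hn
    refine mem_filter.2 ⟨mem_powerset.2 fun p hp ↦ ?_,
      (Nat.le_of_dvd hn0 (Nat.prod_primeFactors_dvd n)).trans hny⟩
    exact Nat.mem_primesLE.2 ⟨(Nat.le_of_mem_primeFactors hp).trans hny,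
      Nat.prime_of_mem_primeFactors hp⟩
  calc Real.log y ≤ Real.log (y + 1 : ℕ) := by gcongr; simp
    _ ≤ harmonic y := log_add_one_le_harmonic y
    _ = ∑ n ∈ Icc 1 y, (n : ℝ)⁻¹ := by simp [harmonic_eq_sum_Icc]
    _ = ∑ T ∈ y.primesLE.powerset with ∏ p ∈ T, p ≤ y,
          ∑ n ∈ Icc 1 y with n.primeFactors = T, (n : ℝ)⁻¹ :=
        (sum_fiberwise_of_maps_to maps_to _).symm
    _ ≤ truncatedEulerProduct (fun p ↦ ((p : ℝ) - 1)⁻¹) y.primesLE y :=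
        sum_le_sum fun T hT ↦ sum_inv_filter_primeFactors_eq_le (fun p hp ↦
          Nat.prime_of_mem_primesLE (mem_powerset.1 (mem_filter.1 hT).1 hp)) y

lemma log_le_totientRatio_mul_truncatedEulerProduct {E y : ℕ} (hE : E ≠ 0) (hy : 0 < y) :
    Real.log y ≤ totientRatio E *
      truncatedEulerProduct (fun p ↦ ((p : ℝ) - 1)⁻¹) {p ∈ y.primesLE | ¬p ∣ E} y := by
  have inv_nonneg {p : ℕ} (hp : p.Prime) : 0 ≤ ((p : ℝ) - 1)⁻¹ :=
    inv_nonneg.2 (sub_nonneg.2 (Nat.one_le_cast.2 hp.one_le))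
  have factor_nonneg (p : ℕ) (hp : p ∈ y.primesLE) : 0 ≤ ((p : ℝ) - 1)⁻¹ :=
    inv_nonneg (Nat.prime_of_mem_primesLE hp)
  have split_off := truncatedEulerProduct_union_le (y := y) (g := fun p ↦ ((p : ℝ) - 1)⁻¹)
    (S := {p ∈ y.primesLE | ¬p ∣ E}) (T := {p ∈ y.primesLE | p ∣ E})
    (fun p hp ↦ (Nat.prime_of_mem_primesLE (mem_filter.1 hp).1).pos)
    (by rwa [union_comm, filter_union_filter_not_eq])
  rw [union_comm, filter_union_filter_not_eq] at split_off
  have dividing_le : ∏ p ∈ y.primesLE with p ∣ E, (1 + ((p : ℝ) - 1)⁻¹) ≤ totientRatio E := by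
    rw [totientRatio_eq_prod hE]
    refine prod_le_prod_of_subset_of_one_le (fun p hp ↦ ?_) (fun p hp ↦ ?_) fun p hp _ ↦ ?_
    · obtain ⟨hpy, hpE⟩ := mem_filter.1 hp
      exact Nat.mem_primeFactors.2 ⟨Nat.prime_of_mem_primesLE hpy, hpE, hE⟩
    · exact add_nonneg zero_le_one (factor_nonneg p (mem_filter.1 hp).1)
    · exact le_add_of_nonneg_right (inv_nonneg (Nat.prime_of_mem_primeFactors hp))
  calc Real.log y ≤ _ := log_le_truncatedEulerProduct_primesLE hy
    _ ≤ _ := split_off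
    _ ≤ _ := by
        rw [mul_comm]
        gcongr
        exact truncatedEulerProduct_nonneg fun p hp ↦ factor_nonneg p (mem_filter.1 hp).1

lemma one_add_inv_sub_one_pow_sub_one_le {p k : ℕ} (hp : p.Prime) (hk : k < p) :
    (1 + ((p : ℝ) - 1)⁻¹) ^ k - 1 ≤ k / (p - k) := by
  have hp0 : (0 : ℝ) < p := mod_cast hp.pos
  have hkp : (0 : ℝ) < p - k := sub_pos.2 (Nat.cast_lt.2 hk)
  have bernoulli : 1 - k / p ≤ (1 - (p : ℝ)⁻¹) ^ k := by
    have h := one_add_mul_le_pow (a := -(p : ℝ)⁻¹)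
      (by linarith [inv_le_one_of_one_le₀ (Nat.one_le_cast (α := ℝ).2 hp.one_le)]) k
    simpa [sub_eq_add_neg, div_eq_mul_inv] using h
  have hpos : 0 < 1 - (k : ℝ) / p := by
    rw [one_sub_div hp0.ne']
    positivity
  calc (1 + ((p : ℝ) - 1)⁻¹) ^ k - 1 = ((1 - (p : ℝ)⁻¹) ^ k)⁻¹ - 1 := by
        rw [one_add_inv_sub_one_eq_inv hp, inv_pow]
    _ ≤ (1 - k / p : ℝ)⁻¹ - 1 := by gcongr
    _ = k / (p - k) := by
        field [hp0.ne', hkp.ne', hpos.ne']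

end Totient

section TupleRoots

/-- The number of residue classes `a` modulo `d` at which `∏ h ∈ H, (a + h)` vanishes. -/
noncomputable def tupleRootCount (H : Finset ℕ) (d : ℕ) : ℕ :=
  Nat.card {a : ZMod d // ∏ h ∈ H, (a + h) = 0}

variable {H : Finset ℕ}

lemma natCast_tuplePoly_eq_zero_iff {d n : ℕ} :
    ∏ h ∈ H, ((n : ZMod d) + h) = 0 ↔ d ∣ tuplePoly H n := by
  rw [← ZMod.natCast_eq_zero_iff, tuplePoly, Nat.cast_prod]
  simp only [Nat.cast_add]

lemma tupleRootCount_one : tupleRootCount H 1 = 1 :=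
  Nat.card_eq_one_iff_unique.2 ⟨inferInstance, ⟨0, Subsingleton.elim _ _⟩⟩

lemma tupleRootCount_le {d : ℕ} (hd : 0 < d) : tupleRootCount H d ≤ d := by
  have : NeZero d := ⟨hd.ne'⟩
  exact (Finite.card_subtype_le _).trans_eq (Nat.card_zmod d)

lemma tupleRootCount_mul {m n : ℕ} (hmn : m.Coprime n) :
    tupleRootCount H (m * n) = tupleRootCount H m * tupleRootCount H n := by
  let e := ZMod.chineseRemainder hmn
  have root_iff (a : ZMod (m * n)) :
      ∏ h ∈ H, (a + h) = 0 ↔ ∏ h ∈ H, ((e a).1 + h) = 0 ∧ ∏ h ∈ H, ((e a).2 + h) = 0 := by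
    rw [← map_eq_zero_iff e e.injective, Prod.ext_iff]
    simp [map_prod, Prod.fst_prod, Prod.snd_prod]
  simp only [tupleRootCount]
  rw [← Nat.card_prod]
  exact Nat.card_congr ((e.toEquiv.subtypeEquiv root_iff).trans
    (Equiv.subtypeProdEquivProd (p := fun a : ZMod m ↦ ∏ h ∈ H, (a + h) = 0)
      (q := fun a : ZMod n ↦ ∏ h ∈ H, (a + h) = 0)))

lemma tupleRootCount_prime {p : ℕ} (hp : p.Prime) : tupleRootCount H p = nuP p H := by
  have : Fact p.Prime := ⟨hp⟩
  have roots_eq : {a : ZMod p | ∏ h ∈ H, (a + h) = 0} =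
      ((H.image (· % p)).image fun r : ℕ ↦ -(r : ZMod p) : Finset (ZMod p)) := by
    ext a
    simp only [Set.mem_ofPred_eq, prod_eq_zero_iff, add_eq_zero_iff_eq_neg, image_image, coe_image,
      Set.mem_image, mem_coe, Function.comp_apply, ZMod.natCast_mod, eq_comm (a := a)]
  have inj : Set.InjOn (fun r : ℕ ↦ -(r : ZMod p)) (H.image (· % p)) := by
    intro r hr r' hr' h
    simp only [coe_image, Set.mem_image, mem_coe] at hr hr'
    obtain ⟨h₁, -, rfl⟩ := hr
    obtain ⟨h₂, -, rfl⟩ := hr'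
    simpa [ZMod.natCast_eq_natCast_iff'] using h
  rw [nuP, ← card_image_of_injOn inj, ← Set.ncard_coe_finset, ← roots_eq]
  rfl

lemma tupleRootCount_eq_prod_nuP {d : ℕ} (hd : Squarefree d) :
    tupleRootCount H d = ∏ p ∈ d.primeFactors, nuP p H := by
  induction d using induction_on_primes with
  | zero => exact absurd hd not_squarefree_zero
  | one => simp [tupleRootCount_one]
  | prime_mul p m hp ih =>
    have hpm : p.Coprime m := Nat.coprime_of_squarefree_mul hd
    rw [tupleRootCount_mul hpm, tupleRootCount_prime hp,
      ih (hd.squarefree_of_dvd (dvd_mul_left m p)),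
      hpm.primeFactors_mul, prod_union hpm.disjoint_primeFactors, hp.primeFactors, prod_singleton]

lemma abs_card_Ioc_filter_modEq_sub_le (M N : ℕ) {d : ℕ} (hd : 0 < d) (a : ℕ) :
    |(#{n ∈ Ioc M (M + N) | n ≡ a [MOD d]} : ℝ) - N / d| ≤ 1 := by
  suffices h : |(#{n ∈ Ioc M (M + N) | n ≡ a [MOD d]} : ℚ) - N / d| ≤ 1 by
    have h' := (Rat.cast_le (K := ℝ)).2 h
    push_cast at h'
    exact h'
  set u : ℚ := (M - a) / d with hu
  have hv : (((M + N : ℕ) : ℚ) - a) / d = u + N / d := by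
    rw [hu]
    push_cast
    ring
  have hcard : (#{n ∈ Ioc M (M + N) | n ≡ a [MOD d]} : ℚ) = ⌊u + N / d⌋ - ⌊u⌋ := by
    have h := Nat.Ioc_filter_modEq_card M (M + N) hd a
    rw [← hu, hv, max_eq_left (sub_nonneg.2 (Int.floor_le_floor (le_add_of_nonneg_right
      (by positivity))))] at h
    exact_mod_cast h
  rw [hcard, abs_le]
  constructor <;>
  linarith [Int.floor_le u, Int.lt_floor_add_one u, Int.floor_le (u + N / d),
    Int.lt_floor_add_one (u + N / d)]

lemma abs_card_filter_dvd_tuplePoly_sub_le (M N : ℕ) {d : ℕ} (hd : 0 < d) :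
    |(#{n ∈ Ioc M (M + N) | d ∣ tuplePoly H n} : ℝ) - tupleRootCount H d * (N / d)| ≤
      tupleRootCount H d := by
  classical
  have : NeZero d := ⟨hd.ne'⟩
  set roots : Finset (ZMod d) := {a | ∏ h ∈ H, (a + h) = 0} with hroots
  have card_roots : tupleRootCount H d = #roots := by
    rw [tupleRootCount, Nat.card_eq_fintype_card, Fintype.card_subtype]
  set hits : Finset ℕ := {n ∈ Ioc M (M + N) | d ∣ tuplePoly H n} with hhits
  have fiber (a : ZMod d) (ha : a ∈ roots) :
      hits.filter (fun n : ℕ ↦ (n : ZMod d) = a) = {n ∈ Ioc M (M + N) | n ≡ a.val [MOD d]} := by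
    ext n
    simp only [hhits, mem_filter, ← natCast_tuplePoly_eq_zero_iff, ← ZMod.natCast_eq_natCast_iff,
      ZMod.natCast_zmod_val, and_assoc]
    refine and_congr_right fun _ ↦ and_iff_right_of_imp ?_
    rintro rfl
    simpa [hroots] using ha
  have card_eq : #hits = ∑ a ∈ roots, #{n ∈ Ioc M (M + N) | n ≡ a.val [MOD d]} := by
    rw [card_eq_sum_card_fiberwise (f := fun n : ℕ ↦ (n : ZMod d)) (t := roots)]
    · exact sum_congr rfl fun a ha ↦ congrArg card (fiber a ha)
    · intro n hn
      have hdn : d ∣ tuplePoly H n := (mem_filter.1 (mem_coe.1 hn)).2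
      simpa [hroots, natCast_tuplePoly_eq_zero_iff] using hdn
  rw [card_eq, card_roots, Nat.cast_sum, ← nsmul_eq_mul, ← sum_const, ← sum_sub_distrib]
  refine (abs_sum_le_sum_abs _ _).trans ((sum_le_sum fun a _ ↦
    abs_card_Ioc_filter_modEq_sub_le M N hd a.val).trans_eq ?_)
  simp

end TupleRoots

section TupleSieve

open BoundingSieve

/-- The product of `k!` and the positive differences of a `k`-element set `H`. At the primes which
do not divide it the elements of `H` occupy `k` of more than `k` residue classes. -/
def tupleDiscriminant (H : Finset ℕ) : ℕ :=
  (#H).factorial * ∏ x ∈ H.offDiag with x.1 < x.2, (x.2 - x.1)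

variable {H : Finset ℕ} {p : ℕ}

lemma tupleDiscriminant_ne_zero : tupleDiscriminant H ≠ 0 := by
  refine mul_ne_zero (Nat.factorial_ne_zero _) (prod_ne_zero_iff.2 fun x hx ↦ ?_)
  exact Nat.sub_ne_zero_of_lt (mem_filter.1 hx).2

lemma card_lt_of_not_dvd_tupleDiscriminant (hp : p.Prime) (h : ¬p ∣ tupleDiscriminant H) :
    #H < p := by
  contrapose! h
  exact (hp.dvd_factorial.2 h).mul_right _

lemma nuP_eq_card_of_not_dvd_tupleDiscriminant (h : ¬p ∣ tupleDiscriminant H) :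
    nuP p H = #H := by
  refine card_image_of_injOn fun a ha b hb hab ↦ ?_
  have sub_dvd {a b : ℕ} (ha : a ∈ H) (hb : b ∈ H) (hlt : a < b) : b - a ∣ tupleDiscriminant H :=
    (dvd_prod_of_mem (fun x : ℕ × ℕ ↦ x.2 - x.1) (a := (a, b))
      (by simp [ha, hb, hlt, hlt.ne])).mul_left _
  rcases lt_trichotomy a b with hlt | heq | hlt
  · exact absurd (((Nat.modEq_iff_dvd' hlt.le).1 hab).trans (sub_dvd ha hb hlt)) h
  · exact heq
  · exact absurd (((Nat.modEq_iff_dvd' hlt.le).1 hab.symm).trans (sub_dvd hb ha hlt)) h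

/-- The sifting of the values of `tuplePoly H` on `Ioc M (M + N)`, counted with multiplicity, by the
primes `p ≤ y` which do not divide `tupleDiscriminant H`. -/
noncomputable def tupleSieve (hH : H.Nonempty) (M N y : ℕ) : BoundingSieve where
  support := (Ioc M (M + N)).image (tuplePoly H)
  prodPrimes := ∏ p ∈ y.primesLE with ¬p ∣ tupleDiscriminant H, p
  prodPrimes_squarefree := (squarefree_primorial y).squarefree_of_dvd
    (prod_dvd_prod_of_subset _ _ _ (filter_subset _ _))
  weights m := #{n ∈ Ioc M (M + N) | tuplePoly H n = m}
  weights_nonneg _ := Nat.cast_nonneg _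
  totalMass := N
  nu := .prodPrimeFactors fun p ↦ #H / p
  nu_mult := .prodPrimeFactors _
  nu_pos_of_prime p hp _ := by
    have := hp.pos
    have := hH.card_pos
    rw [ArithmeticFunction.prodPrimeFactors_apply hp.ne_zero, hp.primeFactors, prod_singleton]
    positivity
  nu_lt_one_of_prime p hp hpP := by
    rw [ArithmeticFunction.prodPrimeFactors_apply hp.ne_zero, hp.primeFactors, prod_singleton,
      div_lt_one (Nat.cast_pos.2 hp.pos), Nat.cast_lt]
    obtain ⟨q, hq, hpq⟩ := (hp.prime.dvd_finsetProd_iff _).1 hpP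
    obtain ⟨hqy, hqH⟩ := mem_filter.1 hq
    rw [← (Nat.prime_dvd_prime_iff_eq hp (Nat.prime_of_mem_primesLE hqy)).1 hpq] at hqH
    exact card_lt_of_not_dvd_tupleDiscriminant hp hqH

variable {hH : H.Nonempty} {M N y d : ℕ}

lemma primeFactors_prodPrimes_tupleSieve :
    (tupleSieve hH M N y).prodPrimes.primeFactors =
      {p ∈ y.primesLE | ¬p ∣ tupleDiscriminant H} :=
  Nat.primeFactors_prod fun _ hp ↦ Nat.prime_of_mem_primesLE (mem_filter.1 hp).1

lemma not_dvd_tupleDiscriminant_of_dvd_prodPrimes (hd : d ∣ (tupleSieve hH M N y).prodPrimes)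
    (hp : p ∈ d.primeFactors) : ¬p ∣ tupleDiscriminant H := by
  have h := Nat.primeFactors_mono hd prodPrimes_ne_zero hp
  rw [primeFactors_prodPrimes_tupleSieve] at h
  exact (mem_filter.1 h).2

lemma nu_tupleSieve (hd : d ∣ (tupleSieve hH M N y).prodPrimes) :
    (tupleSieve hH M N y).nu d = tupleRootCount H d / d := by
  have hsq := squarefree_of_dvd_prodPrimes hd
  have card_eq (p) (hp : p ∈ d.primeFactors) : (#H : ℝ) = nuP p H := mod_cast
    (nuP_eq_card_of_not_dvd_tupleDiscriminant
      (not_dvd_tupleDiscriminant_of_dvd_prodPrimes hd hp)).symm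
  rw [tupleSieve, ArithmeticFunction.prodPrimeFactors_apply hsq.ne_zero, prod_div_distrib,
    prod_congr rfl card_eq, ← Nat.cast_prod, ← Nat.cast_prod,
    Nat.prod_primeFactors_of_squarefree hsq, tupleRootCount_eq_prod_nuP hsq]

lemma nu_tupleSieve_prime (hp : p.Prime) : (tupleSieve hH M N y).nu p = #H / p := by
  rw [tupleSieve, ArithmeticFunction.prodPrimeFactors_apply hp.ne_zero, hp.primeFactors,
    prod_singleton]

lemma multSum_tupleSieve (d : ℕ) :
    (tupleSieve hH M N y).multSum d = #{n ∈ Ioc M (M + N) | d ∣ tuplePoly H n} := by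
  have h := sum_comp (s := Ioc M (M + N)) (fun m ↦ if d ∣ m then (1 : ℝ) else 0) (tuplePoly H)
  rw [natCast_card_filter, h]
  simp [multSum, tupleSieve]

lemma siftedSum_tupleSieve :
    (tupleSieve hH M N y).siftedSum =
      #{n ∈ Ioc M (M + N) | (tupleSieve hH M N y).prodPrimes.Coprime (tuplePoly H n)} := by
  have h := sum_comp (s := Ioc M (M + N))
    (fun m ↦ if (tupleSieve hH M N y).prodPrimes.Coprime m then (1 : ℝ) else 0) (tuplePoly H)
  rw [natCast_card_filter, h]
  simp only [nsmul_eq_mul, mul_ite, mul_one, mul_zero]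
  rfl

lemma abs_rem_tupleSieve_le (hd : d ∣ (tupleSieve hH M N y).prodPrimes) :
    |(tupleSieve hH M N y).rem d| ≤ d := by
  have hd0 : 0 < d := Nat.pos_of_dvd_of_pos hd (Nat.pos_of_ne_zero prodPrimes_ne_zero)
  have h := abs_card_filter_dvd_tuplePoly_sub_le (H := H) M N hd0
  rw [rem, multSum_tupleSieve, nu_tupleSieve hd, div_mul_eq_mul_div, ← mul_div_assoc']
  exact h.trans (Nat.cast_le.2 (tupleRootCount_le hd0))

lemma sum_abs_rem_tupleSieve_le (z : ℕ) :
    ∑ d₁ ∈ (tupleSieve hH M N y).prodPrimes.divisors with d₁ ≤ z,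
      ∑ d₂ ∈ (tupleSieve hH M N y).prodPrimes.divisors with d₂ ≤ z,
        |(tupleSieve hH M N y).rem (d₁.lcm d₂)| ≤ z ^ 4 := by
  set D := {d ∈ (tupleSieve hH M N y).prodPrimes.divisors | d ≤ z} with hD
  have card_le : #D ≤ z := by
    have subset : D ⊆ Icc 1 z := fun d hd ↦ mem_Icc.2
      ⟨Nat.pos_of_mem_divisors (mem_filter.1 hd).1, (mem_filter.1 hd).2⟩
    simpa using card_le_card subset
  have rem_le {d₁ d₂ : ℕ} (h₁ : d₁ ∈ D) (h₂ : d₂ ∈ D) :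
      |(tupleSieve hH M N y).rem (d₁.lcm d₂)| ≤ z * z := by
    obtain ⟨hd₁, hz₁⟩ := mem_filter.1 h₁
    obtain ⟨hd₂, hz₂⟩ := mem_filter.1 h₂
    refine (abs_rem_tupleSieve_le (Nat.lcm_dvd (Nat.dvd_of_mem_divisors hd₁)
      (Nat.dvd_of_mem_divisors hd₂))).trans ?_
    have lcm_le : d₁.lcm d₂ ≤ z * z :=
      (Nat.le_of_dvd (Nat.mul_pos (Nat.pos_of_mem_divisors hd₁) (Nat.pos_of_mem_divisors hd₂))
        (Nat.lcm_dvd_mul d₁ d₂)).trans (Nat.mul_le_mul hz₁ hz₂)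
    exact mod_cast lcm_le
  calc _ ≤ ∑ _d₁ ∈ D, ∑ _d₂ ∈ D, (z * z : ℝ) :=
        sum_le_sum fun d₁ h₁ ↦ sum_le_sum fun d₂ h₂ ↦ rem_le h₁ h₂
    _ = #D * (#D * (z * z)) := by simp only [sum_const, nsmul_eq_mul]
    _ ≤ z * (z * (z * z)) := by gcongr
    _ = z ^ 4 := by ring

lemma selbergTerms_tupleSieve_prime (hp : p.Prime) :
    (tupleSieve hH M N y).selbergTerms p = #H / (p - #H) := by
  have hp0 : (p : ℝ) ≠ 0 := Nat.cast_ne_zero.2 hp.ne_zero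
  rw [selbergTerms_apply, hp.primeFactors, prod_singleton, nu_tupleSieve_prime hp,
    one_sub_div hp0, inv_div, div_mul_div_cancel₀ hp0]

lemma log_pow_le_totientRatio_pow_mul_selbergSum (hy : 0 < y) :
    Real.log y ^ #H ≤ totientRatio (tupleDiscriminant H) ^ #H *
      selbergSum (tupleSieve hH M N y) (y ^ #H) 1 := by
  set S := {p ∈ y.primesLE | ¬p ∣ tupleDiscriminant H}
  have prime_of_mem {p : ℕ} (hp : p ∈ S) : p.Prime :=
    Nat.prime_of_mem_primesLE (mem_filter.1 hp).1
  have inv_nonneg (p) (hp : p ∈ S) : 0 ≤ ((p : ℝ) - 1)⁻¹ :=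
    inv_nonneg.2 (sub_nonneg.2 (Nat.one_le_cast.2 (prime_of_mem hp).one_le))
  calc Real.log y ^ #H
      ≤ (totientRatio (tupleDiscriminant H) *
          truncatedEulerProduct (fun p ↦ ((p : ℝ) - 1)⁻¹) S y) ^ #H := by
        gcongr
        exact log_le_totientRatio_mul_truncatedEulerProduct tupleDiscriminant_ne_zero hy
    _ = totientRatio (tupleDiscriminant H) ^ #H *
          truncatedEulerProduct (fun p ↦ ((p : ℝ) - 1)⁻¹) S y ^ #H := mul_pow ..
    _ ≤ totientRatio (tupleDiscriminant H) ^ #H *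
          truncatedEulerProduct (fun p ↦ (1 + ((p : ℝ) - 1)⁻¹) ^ #H - 1) S (y ^ #H) := by
        have := totientRatio_nonneg (tupleDiscriminant H)
        gcongr
        exact truncatedEulerProduct_pow_le (fun p hp ↦ (prime_of_mem hp).pos) inv_nonneg _
    _ ≤ _ := by
        have := totientRatio_nonneg (tupleDiscriminant H)
        rw [selbergSum_one_eq_truncatedEulerProduct, primeFactors_prodPrimes_tupleSieve]
        gcongr
        refine truncatedEulerProduct_le_of_forall_le (fun p hp ↦ ?_) fun p hp ↦ ?_
        · exact sub_nonneg.2 (one_le_pow₀ (le_add_of_nonneg_right (inv_nonneg p hp)))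
        · rw [selbergTerms_tupleSieve_prime (prime_of_mem hp)]
          exact one_add_inv_sub_one_pow_sub_one_le (prime_of_mem hp)
            (card_lt_of_not_dvd_tupleDiscriminant (prime_of_mem hp) (mem_filter.1 hp).2)

lemma card_filter_prime_le_siftedSum_tupleSieve (hyM : y ≤ M) :
    (#{n ∈ Ioc M (M + N) | ∀ h ∈ H, (n + h).Prime} : ℝ) ≤ (tupleSieve hH M N y).siftedSum := by
  rw [siftedSum_tupleSieve, Nat.cast_le]
  refine card_le_card fun n hn ↦ ?_
  obtain ⟨hnM, hprime⟩ := mem_filter.1 hn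
  refine mem_filter.2 ⟨hnM, Nat.Coprime.prod_right fun h hh ↦ Nat.Coprime.symm ?_⟩
  rw [(hprime h hh).coprime_iff_not_dvd]
  intro hdvd
  have hmem := Nat.mem_primeFactors.2 ⟨hprime h hh, hdvd, prodPrimes_ne_zero⟩
  rw [primeFactors_prodPrimes_tupleSieve, mem_filter, Nat.mem_primesLE] at hmem
  have := (mem_Ioc.1 hnM).1
  omega

theorem card_filter_prime_le_of_le (hH : H.Nonempty) (hy : 2 ≤ y) (hyM : y ≤ M) :
    (#{n ∈ Ioc M (M + N) | ∀ h ∈ H, (n + h).Prime} : ℝ) ≤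
      N * (totientRatio (tupleDiscriminant H) / Real.log y) ^ #H + y ^ (4 * #H) := by
  have hlog : 0 < Real.log y := Real.log_pos (Nat.one_lt_cast.2 hy)
  have hz : 1 ≤ y ^ #H := Nat.one_le_pow _ _ (by omega)
  calc _ ≤ (tupleSieve hH M N y).siftedSum := card_filter_prime_le_siftedSum_tupleSieve hyM
    _ ≤ N / selbergSum (tupleSieve hH M N y) (y ^ #H) 1 + ((y ^ #H : ℕ) : ℝ) ^ 4 := by
        grw [siftedSum_le_div_selbergSum_add hz, sum_abs_rem_tupleSieve_le]
        rfl
    _ ≤ _ := by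
        rw [Nat.cast_pow, ← pow_mul, mul_comm 4]
        gcongr ?_ + _
        rw [div_pow, div_le_iff₀ (selbergSum_one_pos hz), mul_assoc]
        refine le_mul_of_one_le_right (Nat.cast_nonneg N) ?_
        rw [div_mul_eq_mul_div, one_le_div (pow_pos hlog _)]
        exact log_pow_le_totientRatio_pow_mul_selbergSum (by omega)

end TupleSieve

section PrimeTuples

open Filter Real

lemma exists_pow_le_and_log_le {m N : ℕ} (hm : m ≠ 0) (hN : 2 ^ m ≤ N) :
    ∃ y : ℕ, 2 ≤ y ∧ y ^ m ≤ N ∧ log N ≤ 2 * m * log y := by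
  have hy : 2 ≤ m.nthRoot N := (Nat.le_nthRoot_iff hm).2 hN
  refine ⟨m.nthRoot N, hy, Nat.pow_nthRoot_le (Or.inl hm), ?_⟩
  have le_pow : N ≤ (m.nthRoot N) ^ (2 * m) :=
    calc N ≤ (m.nthRoot N + 1) ^ m := (Nat.lt_pow_nthRoot_add_one hm N).le
      _ ≤ ((m.nthRoot N) ^ 2) ^ m := by
          gcongr
          nlinarith
      _ = (m.nthRoot N) ^ (2 * m) := (pow_mul ..).symm
  calc log N ≤ log ((m.nthRoot N : ℝ) ^ (2 * m)) := by
        gcongr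
        · exact_mod_cast (Nat.pow_pos two_pos).trans_le hN
        · exact_mod_cast le_pow
    _ = 2 * m * log (m.nthRoot N) := by
        rw [log_pow]
        push_cast
        rfl

lemma eventually_log_pow_le (m : ℕ) : ∀ᶠ N : ℕ in atTop, log N ^ m ≤ N := by
  have h := tendsto_natCast_atTop_atTop.eventually
    ((isLittleO_pow_log_id_atTop (n := m)).bound one_pos)
  filter_upwards [h] with N hN
  simpa using (le_abs_self _).trans hN

theorem exists_card_filter_prime_le {k : ℕ} (hk : k ≠ 0) :
    ∃ C : ℝ, 0 < C ∧ ∀ᶠ N : ℕ in atTop, ∀ H : Finset ℕ, #H = k →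
      (#{n ∈ Ioc N (2 * N) | ∀ h ∈ H, (n + h).Prime} : ℝ) ≤
        C * (N / log N ^ k) * totientRatio (tupleDiscriminant H) ^ k := by
  refine ⟨(16 * k) ^ k + 1, by positivity, ?_⟩
  filter_upwards [eventually_ge_atTop (2 ^ (8 * k)), eventually_log_pow_le (2 * k)]
    with N hN hlogN H hHk
  subst hHk
  have hH : H.Nonempty := card_ne_zero.1 hk
  obtain ⟨y, hy, hyN, hlog⟩ := exists_pow_le_and_log_le (by omega) hN
  have hyN' : y ≤ N := (Nat.le_self_pow (by omega) y).trans hyN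
  have hlogN0 : 0 < log N := log_pos (Nat.one_lt_cast.2 (by omega))
  have hlogy0 : 0 < log y := log_pos (Nat.one_lt_cast.2 hy)
  set R := totientRatio (tupleDiscriminant H)
  have hR1 : 1 ≤ R := one_le_totientRatio tupleDiscriminant_ne_zero
  have main : N * (R / log y) ^ #H ≤ (16 * #H) ^ #H * (N / log N ^ #H) * R ^ #H := by
    have div_log_le : R / log y ≤ 16 * #H * R / log N := by
      rw [div_le_div_iff₀ hlogy0 hlogN0]
      push_cast at hlog
      nlinarith
    calc N * (R / log y) ^ #H ≤ N * (16 * #H * R / log N) ^ #H := by gcongr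
      _ = _ := by
        rw [div_pow, mul_pow]
        ring
  have error : (y : ℝ) ^ (4 * #H) ≤ N / log N ^ #H * R ^ #H := by
    have pow_le : (y : ℝ) ^ (4 * #H) ≤ N / log N ^ #H := by
      rw [le_div_iff₀ (by positivity)]
      refine (pow_le_pow_iff_left₀ (by positivity) (Nat.cast_nonneg N) two_ne_zero).1 ?_
      calc ((y : ℝ) ^ (4 * #H) * log N ^ #H) ^ 2 = y ^ (8 * #H) * log N ^ (2 * #H) := by ring
        _ ≤ N * N := by
          gcongr
          exact_mod_cast hyN
        _ = N ^ 2 := (sq _).symm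
    exact pow_le.trans (le_mul_of_one_le_right (by positivity) (one_le_pow₀ hR1))
  calc _ ≤ N * (R / log y) ^ #H + y ^ (4 * #H) := by
        simpa only [two_mul] using card_filter_prime_le_of_le (N := N) hH hy hyN'
    _ ≤ _ := by linarith

end PrimeTuples

section Moments

lemma card_filter_subset_primeFactors_le {T : Finset ℕ} (M : ℕ) :
    (#{m ∈ Ioc 0 M | T ⊆ m.primeFactors} : ℝ) ≤ M * ∏ p ∈ T, (p : ℝ)⁻¹ := by
  have subset_multiples : {m ∈ Ioc 0 M | T ⊆ m.primeFactors} ⊆ {m ∈ Ioc 0 M | ∏ p ∈ T, p ∣ m} :=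
    monotone_filter_right _ fun m _ hT ↦
      (prod_dvd_prod_of_subset _ _ _ hT).trans (Nat.prod_primeFactors_dvd m)
  calc (#{m ∈ Ioc 0 M | T ⊆ m.primeFactors} : ℝ) ≤ ((M / ∏ p ∈ T, p : ℕ) : ℝ) := by
        rw [← Nat.Ioc_filter_dvd_card_eq_div]
        exact Nat.cast_le.2 (card_le_card subset_multiples)
    _ ≤ M / (∏ p ∈ T, p : ℕ) := Nat.cast_div_le
    _ = M * ∏ p ∈ T, (p : ℝ)⁻¹ := by rw [Nat.cast_prod, prod_inv_distrib, div_eq_mul_inv]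

lemma sum_prod_primeFactors_one_add_le {c : ℕ → ℝ} (hc : ∀ p, p.Prime → 0 ≤ c p) (M : ℕ) :
    ∑ m ∈ Ioc 0 M, ∏ p ∈ m.primeFactors, (1 + c p) ≤ M * ∏ p ∈ M.primesLE, (1 + c p / p) := by
  have filter_powerset (m : ℕ) (hm : m ∈ Ioc 0 M) :
      {T ∈ M.primesLE.powerset | T ⊆ m.primeFactors} = m.primeFactors.powerset := by
    ext T
    rw [mem_filter, mem_powerset, mem_powerset, and_iff_right_iff_imp]
    exact fun hT ↦ hT.trans fun p hp ↦ Nat.mem_primesLE.2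
      ⟨(Nat.le_of_mem_primeFactors hp).trans (mem_Ioc.1 hm).2, Nat.prime_of_mem_primeFactors hp⟩
  calc ∑ m ∈ Ioc 0 M, ∏ p ∈ m.primeFactors, (1 + c p)
      = ∑ m ∈ Ioc 0 M, ∑ T ∈ M.primesLE.powerset with T ⊆ m.primeFactors, ∏ p ∈ T, c p :=
        sum_congr rfl fun m hm ↦ by rw [prod_one_add, filter_powerset m hm]
    _ = ∑ T ∈ M.primesLE.powerset, #{m ∈ Ioc 0 M | T ⊆ m.primeFactors} * ∏ p ∈ T, c p := by
        simp only [sum_filter]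
        rw [sum_comm]
        simp only [← sum_filter, sum_const, nsmul_eq_mul]
    _ ≤ ∑ T ∈ M.primesLE.powerset, M * ∏ p ∈ T, c p / p := by
        refine sum_le_sum fun T hT ↦ ?_
        have hcT : 0 ≤ ∏ p ∈ T, c p := prod_nonneg fun p hp ↦
          hc p (Nat.prime_of_mem_primesLE (mem_powerset.1 hT hp))
        grw [card_filter_subset_primeFactors_le]
        simp only [div_eq_mul_inv, prod_mul_distrib]
        exact le_of_eq (by ring)
    _ = M * ∏ p ∈ M.primesLE, (1 + c p / p) := by rw [prod_one_add, mul_sum]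

lemma one_add_pow_le_one_add_mul {x : ℝ} (hx0 : 0 ≤ x) (hx1 : x ≤ 1) (k : ℕ) :
    (1 + x) ^ k ≤ 1 + (2 ^ k - 1) * x := by
  have h := (convexOn_pow k).2 (x := (1 : ℝ)) (y := 2) (Set.mem_Ici.2 zero_le_one)
    (Set.mem_Ici.2 zero_le_two) (sub_nonneg.2 hx1) hx0 (sub_add_cancel 1 x)
  have combination_eq : (1 - x) • (1 : ℝ) + x • 2 = 1 + x := by
    simp only [smul_eq_mul]
    ring
  rw [combination_eq] at h
  simp only [smul_eq_mul, one_pow] at h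
  linarith

lemma one_add_inv_sub_one_pow_le {p : ℕ} (hp : p.Prime) (k : ℕ) :
    (1 + ((p : ℝ) - 1)⁻¹) ^ k ≤ 1 + 2 * (2 ^ k - 1) / p := by
  have hp2 : (2 : ℝ) ≤ p := mod_cast hp.two_le
  have hk : (0 : ℝ) ≤ 2 ^ k - 1 := sub_nonneg.2 (one_le_pow₀ one_le_two)
  have inv_le : ((p : ℝ) - 1)⁻¹ ≤ 2 / p := by
    rw [inv_le_comm₀ (by linarith) (by positivity), inv_div]
    linarith
  calc (1 + ((p : ℝ) - 1)⁻¹) ^ k ≤ 1 + (2 ^ k - 1) * ((p : ℝ) - 1)⁻¹ :=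
        one_add_pow_le_one_add_mul (inv_nonneg.2 (by linarith))
          (inv_le_one_of_one_le₀ (by linarith)) k
    _ ≤ 1 + (2 ^ k - 1) * (2 / p) := by gcongr
    _ = 1 + 2 * (2 ^ k - 1) / p := by ring

theorem exists_sum_totientRatio_pow_le (k : ℕ) :
    ∃ B : ℝ, 0 < B ∧ ∀ M : ℕ, ∑ m ∈ Ioc 0 M, totientRatio m ^ k ≤ B * M := by
  set c : ℝ := 2 * (2 ^ k - 1)
  have hc : 0 ≤ c := mul_nonneg zero_le_two (sub_nonneg.2 (one_le_pow₀ one_le_two))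
  have hsum : Summable fun n : ℕ ↦ c * (1 / (n : ℝ) ^ 2) :=
    (Real.summable_one_div_nat_pow.2 one_lt_two).mul_left c
  refine ⟨Real.exp (∑' n : ℕ, c * (1 / (n : ℝ) ^ 2)), Real.exp_pos _, fun M ↦ ?_⟩
  have pow_le (m : ℕ) (hm : m ∈ Ioc 0 M) :
      totientRatio m ^ k ≤ ∏ p ∈ m.primeFactors, (1 + c / p) := by
    rw [totientRatio_eq_prod (mem_Ioc.1 hm).1.ne', ← prod_pow]
    refine prod_le_prod (fun p hp ↦ ?_) fun p hp ↦
      one_add_inv_sub_one_pow_le (Nat.prime_of_mem_primeFactors hp) k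
    have := Nat.one_le_cast (α := ℝ).2 (Nat.prime_of_mem_primeFactors hp).one_le
    exact pow_nonneg (add_nonneg zero_le_one (inv_nonneg.2 (sub_nonneg.2 this))) k
  have prod_le :
      ∏ p ∈ M.primesLE, (1 + c / p / p) ≤ Real.exp (∑' n : ℕ, c * (1 / (n : ℝ) ^ 2)) :=
    calc ∏ p ∈ M.primesLE, (1 + c / p / p)
        ≤ ∏ p ∈ M.primesLE, Real.exp (c * (1 / (p : ℝ) ^ 2)) := by
          gcongr with p
          grw [← Real.add_one_le_exp]
          exact le_of_eq (by ring)
      _ = Real.exp (∑ p ∈ M.primesLE, c * (1 / (p : ℝ) ^ 2)) := (Real.exp_sum ..).symm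
      _ ≤ _ := Real.exp_le_exp.2 (hsum.sum_le_tsum _ fun n _ ↦ by positivity)
  calc ∑ m ∈ Ioc 0 M, totientRatio m ^ k
      ≤ ∑ m ∈ Ioc 0 M, ∏ p ∈ m.primeFactors, (1 + c / p) := sum_le_sum pow_le
    _ ≤ M * ∏ p ∈ M.primesLE, (1 + c / p / p) :=
        sum_prod_primeFactors_one_add_le (fun p _ ↦ by positivity) M
    _ ≤ _ := by
        rw [mul_comm]
        gcongr

end Moments

section Triples

lemma mul_mul_le_add_cubes {a b c : ℝ} (ha : 0 ≤ a) (hb : 0 ≤ b) (hc : 0 ≤ c) :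
    a * b * c ≤ a ^ 3 + b ^ 3 + c ^ 3 := by
  have habc : 0 ≤ a * b * c := by positivity
  have : 0 ≤ (a + b + c) * ((a - b) ^ 2 + (b - c) ^ 2 + (c - a) ^ 2) := by positivity
  linarith

lemma card_triple {i j : ℕ} (hi : 0 < i) (hj : 0 < j) : #{0, i, i + j} = 3 :=
  card_eq_three.2 ⟨0, i, i + j, by omega, by omega, by omega, rfl⟩

lemma tupleDiscriminant_triple {i j : ℕ} (hi : 0 < i) (hj : 0 < j) :
    tupleDiscriminant {0, i, i + j} = 6 * (i * (i + j) * j) := by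
  have increasing_pairs : {x ∈ ({0, i, i + j} : Finset ℕ).offDiag | x.1 < x.2} =
      {(0, i), (0, i + j), (i, i + j)} := by
    ext ⟨a, b⟩
    simp only [mem_filter, mem_offDiag, mem_insert, mem_singleton, Prod.mk.injEq]
    omega
  have ne₁ : (0, i) ∉ ({(0, i + j), (i, i + j)} : Finset (ℕ × ℕ)) := by
    simp only [mem_insert, mem_singleton, Prod.mk.injEq]
    omega
  have ne₂ : (0, i + j) ∉ ({(i, i + j)} : Finset (ℕ × ℕ)) := by
    simp only [mem_singleton, Prod.mk.injEq]
    omega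
  rw [tupleDiscriminant, increasing_pairs, card_triple hi hj, prod_insert ne₁, prod_insert ne₂,
    prod_singleton, Nat.sub_zero, Nat.sub_zero, Nat.add_sub_cancel_left, mul_assoc]
  rfl

lemma totientRatio_tupleDiscriminant_triple_pow_le {i j : ℕ} (hi : 0 < i) (hj : 0 < j) :
    totientRatio (tupleDiscriminant {0, i, i + j}) ^ 3 ≤ totientRatio 6 ^ 3 *
      (totientRatio i ^ 9 + totientRatio (i + j) ^ 9 + totientRatio j ^ 9) := by
  rw [tupleDiscriminant_triple hi hj]
  have nonneg := totientRatio_nonneg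
  calc totientRatio (6 * (i * (i + j) * j)) ^ 3
      ≤ (totientRatio 6 * (totientRatio i * totientRatio (i + j) * totientRatio j)) ^ 3 := by
        gcongr
        · exact nonneg _
        grw [totientRatio_mul_le]
        gcongr
        · exact nonneg _
        grw [totientRatio_mul_le]
        gcongr
        · exact nonneg _
        exact totientRatio_mul_le ..
    _ = totientRatio 6 ^ 3 *
          (totientRatio i ^ 3 * totientRatio (i + j) ^ 3 * totientRatio j ^ 3) := by ring
    _ ≤ totientRatio 6 ^ 3 * ((totientRatio i ^ 3) ^ 3 + (totientRatio (i + j) ^ 3) ^ 3 +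
          (totientRatio j ^ 3) ^ 3) := by
        gcongr
        · exact pow_nonneg (nonneg 6) 3
        exact mul_mul_le_add_cubes (pow_nonneg (nonneg _) 3) (pow_nonneg (nonneg _) 3)
          (pow_nonneg (nonneg _) 3)
    _ = _ := by simp only [← pow_mul, Nat.reduceMul]

lemma sum_product_add_le {f : ℕ → ℝ} (hf : ∀ n, 0 ≤ f n) (M : ℕ) :
    ∑ x ∈ Ioc 0 M ×ˢ Ioc 0 M, f (x.1 + x.2) ≤ M * ∑ n ∈ Ioc 0 (2 * M), f n := by
  have inner_le (i : ℕ) (hi : i ∈ Ioc 0 M) :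
      ∑ j ∈ Ioc 0 M, f (i + j) ≤ ∑ n ∈ Ioc 0 (2 * M), f n := by
    rw [← sum_image (f := f) fun _ _ _ _ h ↦ Nat.add_left_cancel h]
    refine sum_le_sum_of_subset_of_nonneg (image_subset_iff.2 fun j hj ↦ ?_) fun n _ _ ↦ hf n
    rw [mem_Ioc] at hi hj ⊢
    omega
  rw [sum_product]
  calc _ ≤ ∑ i ∈ Ioc 0 M, ∑ n ∈ Ioc 0 (2 * M), f n := sum_le_sum inner_le
    _ = _ := by rw [sum_const, Nat.card_Ioc, nsmul_eq_mul, Nat.sub_zero]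

theorem exists_sum_totientRatio_tupleDiscriminant_triple_le :
    ∃ B : ℝ, 0 < B ∧ ∀ M : ℕ, ∑ x ∈ Ioc 0 M ×ˢ Ioc 0 M,
      totientRatio (tupleDiscriminant {0, x.1, x.1 + x.2}) ^ 3 ≤ B * M ^ 2 := by
  obtain ⟨B, hB, hsum⟩ := exists_sum_totientRatio_pow_le 9
  have h6 : 0 < totientRatio 6 := zero_lt_one.trans_le (one_le_totientRatio (by norm_num))
  refine ⟨totientRatio 6 ^ 3 * (4 * B), by positivity, fun M ↦ ?_⟩
  have sum_snd : ∑ x ∈ Ioc 0 M ×ˢ Ioc 0 M, totientRatio x.2 ^ 9 ≤ B * M ^ 2 := by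
    calc _ = M * ∑ n ∈ Ioc 0 M, totientRatio n ^ 9 := by
          simp only [sum_product, sum_const, Nat.card_Ioc, nsmul_eq_mul, Nat.sub_zero]
      _ ≤ M * (B * M) := by grw [hsum]
      _ = B * M ^ 2 := by ring
  have sum_fst : ∑ x ∈ Ioc 0 M ×ˢ Ioc 0 M, totientRatio x.1 ^ 9 ≤ B * M ^ 2 := by
    rwa [sum_product_right, ← sum_product (f := fun x : ℕ × ℕ ↦ totientRatio x.2 ^ 9)]
  have sum_add : ∑ x ∈ Ioc 0 M ×ˢ Ioc 0 M, totientRatio (x.1 + x.2) ^ 9 ≤ 2 * B * M ^ 2 := by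
    calc _ ≤ M * ∑ n ∈ Ioc 0 (2 * M), totientRatio n ^ 9 :=
          sum_product_add_le (fun n ↦ pow_nonneg (totientRatio_nonneg n) 9) M
      _ ≤ M * (B * (2 * M : ℕ)) := by grw [hsum]
      _ = 2 * B * M ^ 2 := by
          push_cast
          ring
  calc _ ≤ ∑ x ∈ Ioc 0 M ×ˢ Ioc 0 M, totientRatio 6 ^ 3 *
        (totientRatio x.1 ^ 9 + totientRatio (x.1 + x.2) ^ 9 + totientRatio x.2 ^ 9) :=
        sum_le_sum fun x hx ↦ totientRatio_tupleDiscriminant_triple_pow_le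
          (mem_Ioc.1 (mem_product.1 hx).1).1 (mem_Ioc.1 (mem_product.1 hx).2).1
    _ = totientRatio 6 ^ 3 * (∑ x ∈ Ioc 0 M ×ˢ Ioc 0 M, totientRatio x.1 ^ 9 +
          ∑ x ∈ Ioc 0 M ×ˢ Ioc 0 M, totientRatio (x.1 + x.2) ^ 9 +
          ∑ x ∈ Ioc 0 M ×ˢ Ioc 0 M, totientRatio x.2 ^ 9) := by
        rw [← mul_sum, sum_add_distrib, sum_add_distrib]
    _ ≤ totientRatio 6 ^ 3 * (4 * B) * M ^ 2 := by
        rw [mul_assoc]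
        gcongr
        linarith

end Triples

section PrimePairs

lemma div_log_le_primeCounting {N : ℕ} (hN : 4 ≤ N) :
    (N : ℝ) / 4 / Real.log N ≤ N.primeCounting := by
  have hN' : (4 : ℝ) ≤ N := mod_cast hN
  have hlog : 0 < Real.log N := Real.log_pos (by linarith)
  have log_add_one_le : Real.log (N + 1) ≤ 2 * Real.log 2 + ((N + 1) / 4 - 1) := by
    have h := Real.log_le_sub_one_of_pos (x := ((N : ℝ) + 1) / 2 ^ 2) (by positivity)
    rw [Real.log_div (by positivity) (by positivity), Real.log_pow] at h
    push_cast at h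
    linarith
  refine le_trans ?_ (Chebyshev.pi_ge N)
  gcongr
  nlinarith [Real.log_two_gt_d9]

lemma card_nonconsecutive_le_sum_card_triples (N : ℕ) (h : ℝ) :
    #{x ∈ Ioc N (2 * N) ×ˢ Ioc N (2 * N) | x.1.Prime ∧ x.2.Prime ∧ x.1 < x.2 ∧
        (x.2 : ℝ) - x.1 ≤ h ∧ ∃ m ∈ Ioo x.1 x.2, m.Prime} ≤
      ∑ d ∈ Ioc 0 ⌊h⌋₊ ×ˢ Ioc 0 ⌊h⌋₊,
        #{n ∈ Ioc N (2 * N) | ∀ s ∈ ({0, d.1, d.1 + d.2} : Finset ℕ), (n + s).Prime} := by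
  let triples (d : ℕ × ℕ) : Finset ℕ :=
    {n ∈ Ioc N (2 * N) | ∀ s ∈ ({0, d.1, d.1 + d.2} : Finset ℕ), (n + s).Prime}
  calc _ ≤ #((Ioc 0 ⌊h⌋₊ ×ˢ Ioc 0 ⌊h⌋₊).biUnion fun d ↦
        (triples d).image fun n ↦ (n, n + (d.1 + d.2))) := by
        refine card_le_card fun ⟨p, q⟩ hx ↦ ?_
        obtain ⟨hpq, hp, hq, hlt, hdist, m, hm, hmp⟩ := mem_filter.1 hx
        have hqp : q - p ≤ ⌊h⌋₊ := Nat.le_floor (by rwa [Nat.cast_sub hlt.le])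
        obtain ⟨hpm : p < m, hmq : m < q⟩ := mem_Ioo.1 hm
        have p_add : p + (m - p) = m := by omega
        have p_add_add : p + (m - p + (q - m)) = q := by omega
        refine mem_biUnion.2 ⟨(m - p, q - m), ?_, mem_image.2 ⟨p, mem_filter.2 ⟨?_, ?_⟩, ?_⟩⟩
        · simp only [mem_product, mem_Ioc]
          omega
        · exact (mem_product.1 hpq).1
        · simp only [forall_mem_insert, mem_singleton, forall_eq, add_zero, p_add, p_add_add]
          exact ⟨hp, hmp, hq⟩
        · simp only [p_add_add]
    _ ≤ _ := card_biUnion_le.trans (sum_le_sum fun d _ ↦ card_image_le)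

end PrimePairs

/-- **Remark after (4.5) in GPY IV.** There is an absolute constant `C` such that for all
sufficiently large `N` and all `2 < h ≤ N`, the number of pairs of primes `(p, p')` with
`N < p < p' ≤ 2N`, `p' - p ≤ h`, which are not consecutive primes (some prime lies strictly
between them) is at most `C (h/log N)² π(N)`. -/
theorem nonconsecutive_close_prime_pairs_bound :
    ∃ C : ℝ, 0 < C ∧ ∃ N₀ : ℕ, ∀ N : ℕ, N₀ ≤ N → ∀ h : ℝ, 2 < h → h ≤ N →
      ((((Finset.Ioc N (2*N)) ×ˢ (Finset.Ioc N (2*N))).filter (fun x =>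
          x.1.Prime ∧ x.2.Prime ∧ x.1 < x.2 ∧ ((x.2 : ℝ) - (x.1 : ℝ)) ≤ h ∧
          ∃ m ∈ Finset.Ioo x.1 x.2, m.Prime)).card : ℝ)
        ≤ C * (h / Real.log N)^2 * (Nat.primeCounting N : ℝ) := by
  obtain ⟨C, hC, hsieve⟩ := exists_card_filter_prime_le three_ne_zero
  obtain ⟨N₀, hN₀⟩ := Filter.eventually_atTop.1 hsieve
  obtain ⟨B, hB, hsum⟩ := exists_sum_totientRatio_tupleDiscriminant_triple_le
  refine ⟨4 * C * B, by positivity, max N₀ 4, fun N hN h hh _ ↦ ?_⟩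
  obtain ⟨hN₀N, hN4⟩ := max_le_iff.1 hN
  calc _ ≤ ∑ d ∈ Ioc 0 ⌊h⌋₊ ×ˢ Ioc 0 ⌊h⌋₊,
        (#{n ∈ Ioc N (2 * N) | ∀ s ∈ ({0, d.1, d.1 + d.2} : Finset ℕ), (n + s).Prime} : ℝ) :=
        mod_cast card_nonconsecutive_le_sum_card_triples N h
    _ ≤ ∑ d ∈ Ioc 0 ⌊h⌋₊ ×ˢ Ioc 0 ⌊h⌋₊, C * (N / Real.log N ^ 3) *
          totientRatio (tupleDiscriminant {0, d.1, d.1 + d.2}) ^ 3 := by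
        refine sum_le_sum fun d hd ↦ hN₀ N hN₀N _ (card_triple ?_ ?_)
        exacts [(mem_Ioc.1 (mem_product.1 hd).1).1, (mem_Ioc.1 (mem_product.1 hd).2).1]
    _ ≤ C * (N / Real.log N ^ 3) * (B * h ^ 2) := by
        rw [← mul_sum]
        grw [hsum, Nat.floor_le (by linarith)]
    _ = 4 * C * B * (h / Real.log N) ^ 2 * (N / 4 / Real.log N) := by ring
    _ ≤ _ := by grw [div_log_le_primeCounting hN4]
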